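/- arXiv:2107.06521 — 2 statements merged into one kernel-verified Lean document; each statement's English description precedes it below -/
import Mathlib

section
/- Let M > 0 and 0 ≤ a ≤ M, and set r₊ = M + √(M² − a²) (so that r₊² − 2Mr₊ + a² = 0 and r₊² + a² = 2Mr₊). Then for every real θ, (M r₊⁴ − a² r₊² (r₊ sin²θ + M cos²θ)) / (4 (r₊² + a² cos²θ)(r₊² + a²)) = (r₊² − M r₊)/(8M). In particular the coefficient f appearing in the transport equation on the future event horizon is the θ-independent constant −(r₊² − Mr₊)/(8M). -/
open Real

/-- At the outer horizon radius `r₊ = M + √(M² − a²)` of a Kerr black hole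
(`M > 0`, `0 ≤ a ≤ M`), the coefficient
`(M r₊⁴ − a² r₊² (r₊ sin²θ + M cos²θ)) / (4 (r₊² + a² cos²θ)(r₊² + a²))`
is independent of `θ` and equals `(r₊² − M r₊)/(8M)`. -/
theorem horizon_transport_coefficient (M a : ℝ) (hM : 0 < M) (ha0 : 0 ≤ a) (haM : a ≤ M) :
    ∀ θ : ℝ,
      (M * (M + Real.sqrt (M ^ 2 - a ^ 2)) ^ 4
          - a ^ 2 * (M + Real.sqrt (M ^ 2 - a ^ 2)) ^ 2
            * ((M + Real.sqrt (M ^ 2 - a ^ 2)) * Real.sin θ ^ 2 + M * Real.cos θ ^ 2))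
        / (4 * ((M + Real.sqrt (M ^ 2 - a ^ 2)) ^ 2 + a ^ 2 * Real.cos θ ^ 2)
            * ((M + Real.sqrt (M ^ 2 - a ^ 2)) ^ 2 + a ^ 2))
      = ((M + Real.sqrt (M ^ 2 - a ^ 2)) ^ 2 - M * (M + Real.sqrt (M ^ 2 - a ^ 2)))
          / (8 * M) := by
  intro θ
  have hnn : 0 ≤ M ^ 2 - a ^ 2 := by nlinarith
  have hsq := Real.sq_sqrt hnn
  have hs0 := Real.sqrt_nonneg (M ^ 2 - a ^ 2)
  have hE : (M + Real.sqrt (M ^ 2 - a ^ 2)) ^ 2 + a ^ 2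
      - 2 * M * (M + Real.sqrt (M ^ 2 - a ^ 2)) = 0 := by
    linear_combination hsq
  have hr : 0 < M + Real.sqrt (M ^ 2 - a ^ 2) := by linarith
  generalize M + Real.sqrt (M ^ 2 - a ^ 2) = r at hE hr ⊢
  have hS := Real.sin_sq_add_cos_sq θ
  have hD : 4 * (r ^ 2 + a ^ 2 * Real.cos θ ^ 2) * (r ^ 2 + a ^ 2) ≠ 0 := by positivity
  rw [div_eq_div_iff hD (by positivity)]
  linear_combination (-8 * M * r ^ 3
    - 4 * r * (r - M) * (r ^ 2 + a ^ 2 * Real.cos θ ^ 2)) * hE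
    - 8 * M * a ^ 2 * r ^ 3 * hS
end

section
/- Let M > 0 and 0 < a < M, set r₊ = M + √(M² − a²), fix C ≥ 1, and define h(r) = 2(r − r₊) + 4M log(r/r₊) + 3M²(r₊ − r)²/(r₊ r²) + 2M arctan((C−1)M/r) − 2M arctan((C−1)M/r₊). Then for every r > r₊ (so that Δ = r² − 2Mr + a² > 0 and 0 ≤ a²Δ/(r²+a²)² ≤ 1), the derivative h'(r) satisfies the double inequality 0 ≤ ((a²+r²)/Δ)·(1 − √(1 − a²Δ/(r²+a²)²)) < h'(r) < ((a²+r²)/Δ)·(1 + √(1 − a²Δ/(r²+a²)²)). This inequality guarantees that each hyperboloid 𝓗_τ = {t + r_* − h(r) = τ} is a spacelike (Cauchy) hypersurface. -/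
open Real

lemma poly_ineq (M A r : ℝ) (hM : 0 < M) (hA : 0 ≤ A) (hAM : A ≤ M ^ 2) (hr : M < r) :
    (6 * M ^ 2 * (r - M) + A * r) * (r ^ 2 - 2 * M * r + A)
      < 4 * M * r ^ 2 * (2 * M * r - A) * 1 := by
  obtain ⟨u, rfl⟩ : ∃ u, r = M + u := ⟨r - M, by ring⟩
  have hu : 0 < u := by linarith
  obtain ⟨B, rfl⟩ : ∃ B, A = M ^ 2 - B := ⟨M ^ 2 - A, by ring⟩
  have hB : 0 ≤ B := by linarith
  have h1 : 0 ≤ B * (M ^ 2 - B) := mul_nonneg hB hA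
  have h2 : 0 ≤ B * (M ^ 2 - B) * u := by positivity
  have h3 : 0 ≤ B * (M ^ 2 - B) * M := by positivity
  have h4 : 0 ≤ B * u * M ^ 2 := by positivity
  have h5 : 0 ≤ B * u ^ 2 * M := by positivity
  have h6 : 0 ≤ B * u ^ 3 := by positivity
  have h7 : 0 ≤ B * M ^ 3 := by positivity
  have h8 : 0 < M ^ 5 := by positivity
  have h9 : 0 < M ^ 4 * u := by positivity
  have h10 : 0 < M ^ 3 * u ^ 2 := by positivity
  have h11 : 0 < M ^ 2 * u ^ 3 := by positivity
  nlinarith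

/-- For `r > r₊ = M + √(M² − a²)` (so `Δ = r² − 2Mr + a² > 0` and
`0 ≤ a²Δ/(r²+a²)² ≤ 1`), the derivative of the hyperboloidal height function satisfies
`0 ≤ ((a²+r²)/Δ)(1 − √(1 − a²Δ/(r²+a²)²)) < h'(r) < ((a²+r²)/Δ)(1 + √(1 − a²Δ/(r²+a²)²))`,
which guarantees that the hyperboloids `𝓗_τ` are spacelike Cauchy hypersurfaces. -/
theorem height_function_causal_condition (M a C : ℝ) (hM : 0 < M) (ha0 : 0 < a)
    (haM : a < M) (hC : 1 ≤ C) :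
    ∀ r : ℝ, M + Real.sqrt (M ^ 2 - a ^ 2) < r →
      0 < r ^ 2 - 2 * M * r + a ^ 2 ∧
      a ^ 2 * (r ^ 2 - 2 * M * r + a ^ 2) / (r ^ 2 + a ^ 2) ^ 2 ≤ 1 ∧
      0 ≤ (a ^ 2 + r ^ 2) / (r ^ 2 - 2 * M * r + a ^ 2)
            * (1 - Real.sqrt (1 - a ^ 2 * (r ^ 2 - 2 * M * r + a ^ 2)
                / (r ^ 2 + a ^ 2) ^ 2)) ∧
      (a ^ 2 + r ^ 2) / (r ^ 2 - 2 * M * r + a ^ 2)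
            * (1 - Real.sqrt (1 - a ^ 2 * (r ^ 2 - 2 * M * r + a ^ 2)
                / (r ^ 2 + a ^ 2) ^ 2))
        < 2 + 4 * M / r
            + 6 * M ^ 2 * (r - (M + Real.sqrt (M ^ 2 - a ^ 2))) / r ^ 3
            - 2 * (C - 1) * M ^ 2 / ((C - 1) ^ 2 * M ^ 2 + r ^ 2) ∧
      2 + 4 * M / r
            + 6 * M ^ 2 * (r - (M + Real.sqrt (M ^ 2 - a ^ 2))) / r ^ 3
            - 2 * (C - 1) * M ^ 2 / ((C - 1) ^ 2 * M ^ 2 + r ^ 2)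
        < (a ^ 2 + r ^ 2) / (r ^ 2 - 2 * M * r + a ^ 2)
            * (1 + Real.sqrt (1 - a ^ 2 * (r ^ 2 - 2 * M * r + a ^ 2)
                / (r ^ 2 + a ^ 2) ^ 2)) := by
  intro r hr
  have hMa : 0 < M ^ 2 - a ^ 2 := by nlinarith
  set q := Real.sqrt (M ^ 2 - a ^ 2) with hq
  have hq0 : 0 < q := Real.sqrt_pos.mpr hMa
  have hq2 : q ^ 2 = M ^ 2 - a ^ 2 := Real.sq_sqrt hMa.le
  have hrM : M < r := by linarith
  have hr0 : 0 < r := by linarith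
  have hD : 0 < r ^ 2 - 2 * M * r + a ^ 2 := by nlinarith
  have hp := poly_ineq M (a ^ 2) r hM (by positivity) (by linarith) hrM
  set D := r ^ 2 - 2 * M * r + a ^ 2 with hDdef
  have hK : 0 < r ^ 2 + a ^ 2 := by positivity
  have hDK : D ≤ r ^ 2 + a ^ 2 := by
    have : 0 < M * r := by positivity
    rw [hDdef]; linarith
  have hx1 : a ^ 2 * D / (r ^ 2 + a ^ 2) ^ 2 ≤ 1 := by
    rw [div_le_one (by positivity), sq (r ^ 2 + a ^ 2)]
    apply mul_le_mul _ hDK hD.le hK.le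
    nlinarith
  have hx0 : 0 ≤ a ^ 2 * D / (r ^ 2 + a ^ 2) ^ 2 := by positivity
  have hxK : (a ^ 2 + r ^ 2) / D * (a ^ 2 * D / (r ^ 2 + a ^ 2) ^ 2)
      = a ^ 2 / (r ^ 2 + a ^ 2) := by
    rw [add_comm (a ^ 2) (r ^ 2)]
    field_simp
  set x := a ^ 2 * D / (r ^ 2 + a ^ 2) ^ 2 with hx
  have hs1 : Real.sqrt (1 - x) ≤ 1 := by
    exact Real.sqrt_le_iff.mpr ⟨by norm_num, by linarith⟩
  have hs0 : 0 ≤ Real.sqrt (1 - x) := Real.sqrt_nonneg _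
  have hss : Real.sqrt (1 - x) ^ 2 = 1 - x := Real.sq_sqrt (by linarith)
  have hsx : 1 - x ≤ Real.sqrt (1 - x) := by nlinarith
  set s := Real.sqrt (1 - x) with hs
  have hKD : 0 < (a ^ 2 + r ^ 2) / D := by positivity
  have hT0 : 0 ≤ 2 * (C - 1) * M ^ 2 / ((C - 1) ^ 2 * M ^ 2 + r ^ 2) := by
    have : 0 ≤ C - 1 := by linarith
    positivity
  have hT1 : 2 * (C - 1) * M ^ 2 / ((C - 1) ^ 2 * M ^ 2 + r ^ 2) ≤ M / r := by
    rw [div_le_div_iff₀ (by positivity) hr0]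
    nlinarith [mul_nonneg hM.le (sq_nonneg ((C - 1) * M - r))]
  have haK : a ^ 2 / (r ^ 2 + a ^ 2) ≤ 1 := by
    rw [div_le_one hK]; nlinarith
  have hMr : 0 < M / r := by positivity
  have h4 : 4 * M / r = 4 * (M / r) := by ring
  refine ⟨hD, hx1, mul_nonneg hKD.le (by linarith), ?_, ?_⟩
  · have h1 : (a ^ 2 + r ^ 2) / D * (1 - s) ≤ (a ^ 2 + r ^ 2) / D * x :=
      mul_le_mul_of_nonneg_left (by linarith) hKD.le
    have h6 : 0 ≤ 6 * M ^ 2 * (r - (M + q)) / r ^ 3 := by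
      have : 0 ≤ r - (M + q) := by linarith
      positivity
    linarith
  · have h1 : (a ^ 2 + r ^ 2) / D * (2 - x) ≤ (a ^ 2 + r ^ 2) / D * (1 + s) :=
      mul_le_mul_of_nonneg_left (by linarith) hKD.le
    have h6 : 6 * M ^ 2 * (r - (M + q)) / r ^ 3 ≤ 6 * M ^ 2 * (r - M) / r ^ 3 := by
      gcongr; linarith
    have h7 : a ^ 2 / (r ^ 2 + a ^ 2) ≤ a ^ 2 * r / r ^ 3 := by
      rw [div_le_div_iff₀ hK (by positivity)]
      have : 0 ≤ a ^ 2 * r * a ^ 2 := by positivity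
      linarith [show a ^ 2 * r * (r ^ 2 + a ^ 2) = a ^ 2 * r ^ 3 + a ^ 2 * r * a ^ 2 by ring]
    have h8 : 6 * M ^ 2 * (r - M) / r ^ 3 + a ^ 2 * r / r ^ 3
        < 4 * M * (2 * M * r - a ^ 2) / (r * D) := by
      rw [← add_div, div_lt_div_iff₀ (by positivity) (by positivity)]
      have h := mul_lt_mul_of_pos_left hp hr0
      calc (6 * M ^ 2 * (r - M) + a ^ 2 * r) * (r * D)
          = r * ((6 * M ^ 2 * (r - M) + a ^ 2 * r) * D) := by ring
        _ < r * (4 * M * r ^ 2 * (2 * M * r - a ^ 2) * 1) := h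
        _ = 4 * M * (2 * M * r - a ^ 2) * r ^ 3 := by ring
    have h9 : (a ^ 2 + r ^ 2) / D * 2
        = 2 + 4 * M / r + 4 * M * (2 * M * r - a ^ 2) / (r * D) := by
      have hD' : D ≠ 0 := hD.ne'
      field_simp
      rw [hDdef]; ring
    have h10 : (a ^ 2 + r ^ 2) / D * (2 - x)
        = (a ^ 2 + r ^ 2) / D * 2 - (a ^ 2 + r ^ 2) / D * x := by ring
    linarith
end
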